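/- arXiv:1009.1647 — 2 statements merged into one kernel-verified Lean document; each statement's English description precedes it below -/
import Mathlib

section
/- Let G be a group with a convergence group action on a compact metrizable space M with at least three points, let H be a dynamically quasiconvex subgroup of G, let J ≤ G be an infinite subgroup, and let z ∈ Λ(H) ∩ Λ(J) be a conical limit point of J. Then H ∩ J is infinite and z is a conical limit point of H ∩ J; in particular z ∈ Λ(H ∩ J). -/
open Pointwise Filter Topology Set

section ConvergenceGroups

variable (G M : Type*) [Group G] [TopologicalSpace M] [MulAction G M]

/-- A convergence group action: the action is by homeomorphisms (each element acts
continuously, hence as a homeomorphism since the action is by a group), and the induced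
diagonal action on the space of distinct triples of points of `M` is properly
discontinuous. -/
def IsConvergenceAction : Prop :=
  (∀ g : G, Continuous fun x : M => g • x) ∧
    ∀ K L : Set (M × M × M), IsCompact K → IsCompact L →
      (∀ t ∈ K ∪ L, t.1 ≠ t.2.1 ∧ t.1 ≠ t.2.2 ∧ t.2.1 ≠ t.2.2) →
      {g : G | ((g • K) ∩ L).Nonempty}.Finite

/-- The limit set of a subgroup `H ≤ G`: the set of accumulation points in `M` of
the `H`-orbits of points of `M`. -/
def limitSet (H : Subgroup G) : Set M :=
  {x : M | ∃ m : M, x ∈ closure (((fun h : G => h • m) '' (H : Set G)) \ {x})}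

/-- `z` is a conical limit point of the subgroup `H`. -/
def IsConicalLimitPoint (H : Subgroup G) (z : M) : Prop :=
  ∃ (h : ℕ → G) (a b : M), (∀ n, h n ∈ H) ∧ a ≠ b ∧
    Tendsto (fun n => h n • z) atTop (nhds a) ∧
    ∀ q : M, q ≠ z → Tendsto (fun n => h n • q) atTop (nhds b)

/-- `g` is loxodromic: it has infinite order and fixes exactly two points of `M`. -/
def IsLoxodromic (g : G) : Prop :=
  ¬ IsOfFinOrder g ∧ {x : M | g • x = x}.encard = 2

/-- `p` is a bounded parabolic point of the subgroup `H`: its stabilizer in `H` is an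
infinite subgroup containing no loxodromic element, which acts cocompactly on
`Λ(H) \ {p}`. -/
def IsBoundedParabolicPoint (H : Subgroup G) (p : M) : Prop :=
  ((H ⊓ MulAction.stabilizer G p : Subgroup G) : Set G).Infinite ∧
  (∀ g ∈ H ⊓ MulAction.stabilizer G p, ¬ IsLoxodromic G M g) ∧
  ∃ C : Set M, IsCompact C ∧ C ⊆ limitSet G M H \ {p} ∧
    limitSet G M H \ {p} ⊆ ⋃ g ∈ (H ⊓ MulAction.stabilizer G p : Subgroup G), g • C

/-- `H` is dynamically quasiconvex: for every pair of disjoint closed subsets `K, L` of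
`M`, the set of cosets `gH` with `gΛ(H)` meeting both `K` and `L` is finite. -/
def DynamicallyQuasiconvex (H : Subgroup G) : Prop :=
  ∀ K L : Set M, IsClosed K → IsClosed L → Disjoint K L →
    ((fun g : G => (g : G ⧸ H)) ''
      {g : G | ((g • limitSet G M H) ∩ K).Nonempty ∧
               ((g • limitSet G M H) ∩ L).Nonempty}).Finite

end ConvergenceGroups


theorem third_point {M : Type*} (h3 : ∃ a b c : M, a ≠ b ∧ a ≠ c ∧ b ≠ c) (p q : M) :
    ∃ c : M, c ≠ p ∧ c ≠ q := by
  obtain ⟨a, b, c, h1, h2, h3⟩ := h3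
  by_contra hne
  push Not at hne
  have ha := hne a
  have hb := hne b
  have hc := hne c
  by_cases ea : a = p <;> by_cases eb : b = p <;> by_cases ec : c = p <;> simp_all

theorem pd_filter {G M : Type*} [Group G] [TopologicalSpace M] [CompactSpace M] [T2Space M]
    [MulAction G M] (hconv : IsConvergenceAction G M) {ι : Type*} (l : Filter ι) [l.NeBot]
    (f : ι → G) (hf : Tendsto f l cofinite) (x y w : ι → M) {x₀ y₀ w₀ x₁ y₁ w₁ : M}
    (hx : Tendsto x l (𝓝 x₀)) (hy : Tendsto y l (𝓝 y₀)) (hw : Tendsto w l (𝓝 w₀))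
    (hx' : Tendsto (fun i => f i • x i) l (𝓝 x₁)) (hy' : Tendsto (fun i => f i • y i) l (𝓝 y₁))
    (hw' : Tendsto (fun i => f i • w i) l (𝓝 w₁))
    (h0 : x₀ ≠ y₀ ∧ x₀ ≠ w₀ ∧ y₀ ≠ w₀) (h1 : x₁ ≠ y₁ ∧ x₁ ≠ w₁ ∧ y₁ ≠ w₁) : False := by
  have hopen : IsOpen {t : M × M × M | t.1 ≠ t.2.1 ∧ t.1 ≠ t.2.2 ∧ t.2.1 ≠ t.2.2} := by
    refine IsOpen.inter ?_ (IsOpen.inter ?_ ?_)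
    · exact isOpen_ne_fun (by fun_prop) (by fun_prop)
    · exact isOpen_ne_fun (by fun_prop) (by fun_prop)
    · exact isOpen_ne_fun (by fun_prop) (by fun_prop)
  obtain ⟨K, hKn, hKs, hK⟩ := local_compact_nhds (hopen.mem_nhds (x := (x₀, y₀, w₀)) h0)
  obtain ⟨L, hLn, hLs, hL⟩ := local_compact_nhds (hopen.mem_nhds (x := (x₁, y₁, w₁)) h1)
  have hfin := hconv.2 K L hK hL (by
    rintro t (ht | ht)
    · exact hKs ht
    · exact hLs ht)
  have e1 := (hx.prodMk_nhds (hy.prodMk_nhds hw)).eventually hKn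
  have e2 := (hx'.prodMk_nhds (hy'.prodMk_nhds hw')).eventually hLn
  have e3 := hf.eventually hfin.compl_mem_cofinite
  obtain ⟨i, i1, i2, i3⟩ := (e1.and (e2.and e3)).exists
  apply i3
  exact ⟨_, ⟨(x i, y i, w i), i1, rfl⟩, i2⟩

theorem ultra_lim {M : Type*} [TopologicalSpace M] [CompactSpace M] {ι : Type*}
    (V : Ultrafilter ι) (x : ι → M) : ∃ x₀, Tendsto x V (𝓝 x₀) := by
  obtain ⟨x₀, -, h⟩ := isCompact_univ.ultrafilter_le_nhds (V.map x) (by simp)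
  exact ⟨x₀, h⟩

/-- Convergence dynamics along an ultrafilter. -/
theorem attract {G M : Type*} [Group G] [TopologicalSpace M] [CompactSpace M] [T2Space M]
    [MulAction G M] (hconv : IsConvergenceAction G M) {ι : Type*} (V : Ultrafilter ι)
    (f : ι → G) (hf : Tendsto f V cofinite) (u v : ι → M) {a b c : M} (hab : a ≠ b)
    (hca : c ≠ a) (hcb : c ≠ b)
    (hu : Tendsto u V (𝓝 a)) (hv : Tendsto v V (𝓝 b))
    (hu' : Tendsto (fun i => f i • u i) V (𝓝 a)) (hv' : Tendsto (fun i => f i • v i) V (𝓝 b))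
    (hc : Tendsto (fun i => f i • c) V (𝓝 a)) (x : ι → M) {x₀ : M}
    (hx : Tendsto x V (𝓝 x₀)) (hxb : x₀ ≠ b) : Tendsto (fun i => f i • x i) V (𝓝 a) := by
  obtain ⟨x₁, hx1⟩ := ultra_lim V (fun i => f i • x i)
  have hcc : Tendsto (fun _ : ι => c) V (𝓝 c) := tendsto_const_nhds
  obtain ⟨d, hd⟩ := ultra_lim V (fun i => (f i)⁻¹ • c)
  have hd' : Tendsto (fun i => f i • (f i)⁻¹ • c) V (𝓝 c) := by simp
  -- the limit of the preimages of c is b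
  have hdb : d = b := by
    by_contra hdb
    by_cases hdc : d = c
    · subst hdc
      exact pd_filter hconv V f hf _ _ _ hd hu hv hd' hu' hv' ⟨hca, hcb, hab⟩ ⟨hca, hcb, hab⟩
    · exact pd_filter hconv V f hf _ _ _ hd hcc hv hd' hc hv' ⟨hdc, hdb, hcb⟩ ⟨hca, hcb, hab⟩
  subst hdb
  have key : x₁ = a ∨ x₁ = d := by
    by_contra hne
    push Not at hne
    by_cases hxc : x₀ = c
    · subst hxc
      exact pd_filter hconv V f hf _ _ _ hx hu hv hx1 hu' hv' ⟨hca, hcb, hab⟩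
        ⟨hne.1, hne.2, hab⟩
    · exact pd_filter hconv V f hf _ _ _ hx hcc hv hx1 hc hv' ⟨hxc, hxb, hcb⟩
        ⟨hne.1, hne.2, hab⟩
  rcases key with rfl | rfl
  · exact hx1
  · exfalso
    by_cases hxa : x₀ = a
    · subst hxa
      exact pd_filter hconv V f hf _ _ _ hd hx hcc hd' hx1 hc ⟨hab.symm, hcb.symm, hca.symm⟩
        ⟨hcb, hca, hab.symm⟩
    · exact pd_filter hconv V f hf _ _ _ hd hx hu hd' hx1 hu' ⟨hxb.symm, hab.symm, hxa⟩
        ⟨hcb, hca, hab.symm⟩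

theorem attract_set {G M : Type*} [Group G] [TopologicalSpace M] [CompactSpace M] [T2Space M]
    [MulAction G M] (hconv : IsConvergenceAction G M) {ι : Type*} (V : Ultrafilter ι)
    (f : ι → G) (hf : Tendsto f V cofinite) (u v : ι → M) {a b c : M} (hab : a ≠ b)
    (hca : c ≠ a) (hcb : c ≠ b)
    (hu : Tendsto u V (𝓝 a)) (hv : Tendsto v V (𝓝 b))
    (hu' : Tendsto (fun i => f i • u i) V (𝓝 a)) (hv' : Tendsto (fun i => f i • v i) V (𝓝 b))
    (hc : Tendsto (fun i => f i • c) V (𝓝 a)) {A B : Set M} (hA : IsOpen A) (hB : IsOpen B)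
    (haA : a ∈ A) (hbB : b ∈ B) : ∀ᶠ i in V, ∀ p, p ∉ B → f i • p ∈ A := by
  by_contra hcon
  replace hcon := Ultrafilter.eventually_not.2 hcon
  have : ∀ i, ∃ p : M, (¬ ∀ p, p ∉ B → f i • p ∈ A) → p ∉ B ∧ f i • p ∉ A := by
    intro i
    by_cases h : ∀ p, p ∉ B → f i • p ∈ A
    · exact ⟨a, fun h' => absurd h h'⟩
    · push Not at h
      obtain ⟨p, hp⟩ := h
      exact ⟨p, fun _ => hp⟩
  choose x hx using this
  obtain ⟨x₀, hx0⟩ := ultra_lim V x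
  have hxb : x₀ ≠ b := by
    rintro rfl
    obtain ⟨i, h1, h2⟩ := (hcon.and (hx0.eventually (hB.mem_nhds hbB))).exists
    exact (hx i h1).1 h2
  have := attract hconv V f hf u v hab hca hcb hu hv hu' hv' hc x hx0 hxb
  obtain ⟨i, h1, h2⟩ := (hcon.and (this.eventually (hA.mem_nhds haA))).exists
  exact (hx i h1).2 h2

theorem conical_finite {G M : Type*} [Group G] [TopologicalSpace M] [T2Space M] [MulAction G M]
    (h3 : ∃ a b c : M, a ≠ b ∧ a ≠ c ∧ b ≠ c) (z b : M) (h : ℕ → G)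
    (hq : ∀ q : M, q ≠ z → Tendsto (fun n => h n • q) atTop (𝓝 b)) :
    Tendsto h atTop cofinite := by
  have h2 : ∃ p q : M, p ≠ z ∧ q ≠ z ∧ p ≠ q := by
    obtain ⟨p, hp, -⟩ := third_point h3 z z
    obtain ⟨q, hq, hqp⟩ := third_point h3 z p
    exact ⟨p, q, hp, hq, hqp.symm⟩
  obtain ⟨p, q, hp, hq', hpq⟩ := h2
  refine le_cofinite_iff_eventually_ne.2 fun g => ?_
  rw [eventually_map]
  by_contra hcon
  have hfr : ∃ᶠ n in atTop, h n = g := by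
    simpa [Filter.Frequently] using hcon
  have key : ∀ r : M, r ≠ z → g • r = b := by
    intro r hr
    by_contra hne
    obtain ⟨n, h1, h2⟩ := (hfr.and_eventually ((hq r hr).eventually_ne (Ne.symm hne))).exists
    exact h2 (by rw [h1])
  exact hpq (MulAction.injective g ((key p hp).trans (key q hq').symm))

theorem no_expand {G M : Type*} [Group G] [TopologicalSpace M] [CompactSpace M] [T2Space M]
    [MulAction G M] (hconv : IsConvergenceAction G M)
    (H : Subgroup G) (z : M) (hH : limitSet G M H ⊆ {z}) (j h : G) (hh : h ∈ H)
    {A B : Set M} {c : M} (hA : IsOpen A) (hAB : Disjoint A B) (hc : c ∉ A) (hcB : c ∉ B)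
    (hz : j • z ∈ A) (hf : ∀ p, p ∉ A → (j * h * j⁻¹) • p ∈ B) : False := by
  have hB : ∀ i : ℕ, (j * h * j⁻¹) ^ (i + 1) • c ∈ B := by
    intro i
    induction i with
    | zero => simpa using hf c hc
    | succ i ih =>
      rw [pow_succ', mul_smul]
      exact hf _ (fun hmem => hAB.le_bot ⟨hmem, ih⟩)
  have hconj : ∀ i : ℕ, j • h ^ i • j⁻¹ • c = (j * h * j⁻¹) ^ i • c := by
    intro i
    rw [conj_pow, mul_smul, mul_smul]
  by_cases hinj : Function.Injective (fun i : ℕ => h ^ i • j⁻¹ • c)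
  · obtain ⟨y, hy⟩ := ultra_lim (hyperfilter ℕ) (fun i : ℕ => h ^ i • j⁻¹ • c)
    have hne : ∀ᶠ i in (hyperfilter ℕ : Filter ℕ), h ^ i • j⁻¹ • c ≠ y :=
      (hinj.tendsto_cofinite.eventually (eventually_cofinite_ne y)).filter_mono
        hyperfilter_le_cofinite
    have hyL : y ∈ limitSet G M H := by
      refine ⟨j⁻¹ • c, mem_closure_of_tendsto hy ?_⟩
      filter_upwards [hne] with i hi
      exact ⟨⟨h ^ i, H.pow_mem hh i, rfl⟩, hi⟩
    have hyz : y = z := hH hyL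
    subst hyz
    have h1 := ((hconv.1 j).tendsto y).comp hy
    have e1 := h1.eventually (hA.mem_nhds hz)
    have e2 : ∀ᶠ i in (hyperfilter ℕ : Filter ℕ), i ≠ 0 :=
      (eventually_cofinite_ne 0).filter_mono hyperfilter_le_cofinite
    obtain ⟨i, i1, i2⟩ := (e1.and e2).exists
    obtain ⟨k, rfl⟩ := Nat.exists_eq_succ_of_ne_zero i2
    simp only [Function.comp, hconj] at i1
    exact hAB.le_bot ⟨i1, hB k⟩
  · have : ∃ k m : ℕ, h ^ (k + (m + 1)) • j⁻¹ • c = h ^ k • j⁻¹ • c := by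
      simp only [Function.Injective] at hinj
      push Not at hinj
      obtain ⟨s, t, hst, hne⟩ := hinj
      rcases lt_or_gt_of_ne hne with hlt | hlt
      · exact ⟨s, t - s - 1, by rw [show s + (t - s - 1 + 1) = t by omega]; exact hst.symm⟩
      · exact ⟨t, s - t - 1, by rw [show t + (s - t - 1 + 1) = s by omega]; exact hst⟩
    obtain ⟨k, m, hkm⟩ := this
    rw [pow_add, mul_smul] at hkm
    have h1 := MulAction.injective _ hkm
    have h2 := hconj (m + 1)
    rw [h1, smul_inv_smul] at h2
    exact hcB (h2 ▸ hB m)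

theorem parabolic_not_conical {G M : Type*} [Group G] [TopologicalSpace M] [CompactSpace M]
    [T2Space M] [MulAction G M] (hconv : IsConvergenceAction G M)
    (h3 : ∃ a b c : M, a ≠ b ∧ a ≠ c ∧ b ≠ c)
    (H : Subgroup G) (z : M) (hzH : z ∈ limitSet G M H) (hH : limitSet G M H ⊆ {z})
    (j : ℕ → G) (a b : M) (hab : a ≠ b) (hja : Tendsto (fun n => j n • z) atTop (𝓝 a))
    (hjb : ∀ q : M, q ≠ z → Tendsto (fun n => j n • q) atTop (𝓝 b)) : False := by
  have hfix : ∀ h ∈ H, h • z = z := by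
    intro h hh
    apply hH
    obtain ⟨m, hm⟩ := hzH
    refine ⟨m, ?_⟩
    have := image_closure_subset_closure_image (hconv.1 h) ⟨z, hm, rfl⟩
    refine closure_mono ?_ this
    rintro _ ⟨_, ⟨⟨g, hg, rfl⟩, hne⟩, rfl⟩
    refine ⟨⟨h * g, H.mul_mem hh hg, mul_smul _ _ _⟩, ?_⟩
    intro h'
    exact hne (MulAction.injective h h')
  have hinf : Infinite H := by
    by_contra hfin
    rw [not_infinite_iff_finite] at hfin
    obtain ⟨m, hm⟩ := hzH
    have hS : (((fun h : G => h • m) '' (H : Set G)) \ {z}).Finite :=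
      (Set.Finite.image _ (Set.toFinite (H : Set G))).sdiff
    rw [hS.isClosed.closure_eq] at hm
    exact hm.2 rfl
  obtain ⟨q, hq⟩ : ∃ q : M, q ≠ z := (third_point h3 z z).imp fun _ h => h.1
  obtain ⟨c, hca, hcb⟩ : ∃ c : M, c ≠ a ∧ c ≠ b :=
    third_point h3 a b
  obtain ⟨A', B', hA', hB', haA', hbB', hAB'⟩ := t2_separation hab
  set A := A' ∩ {c}ᶜ
  set B := B' ∩ {c}ᶜ
  have hA : IsOpen A := hA'.inter isOpen_compl_singleton
  have hB : IsOpen B := hB'.inter isOpen_compl_singleton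
  have haA : a ∈ A := ⟨haA', hca.symm⟩
  have hbB : b ∈ B := ⟨hbB', hcb.symm⟩
  have hcA : c ∉ A := fun h => h.2 rfl
  have hcB : c ∉ B := fun h => h.2 rfl
  have hAB : Disjoint A B := hAB'.mono inter_subset_left inter_subset_left
  let U : Ultrafilter ℕ := hyperfilter ℕ
  have hU : (U : Filter ℕ) ≤ atTop := Nat.hyperfilter_le_atTop
  let l : Filter (H × ℕ) := (cofinite : Filter H).curry (U : Filter ℕ)
  have hl : l.NeBot := by
    refine ⟨fun hbot => ?_⟩
    have h0 : ∀ᶠ p : H × ℕ in l, False := by rw [hbot]; exact eventually_bot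
    obtain ⟨h, hh⟩ := (eventually_curry_iff.1 h0).exists
    obtain ⟨n, hn⟩ := hh.exists
    exact hn
  let V : Ultrafilter (H × ℕ) := Ultrafilter.of l
  have hV : (V : Filter (H × ℕ)) ≤ l := Ultrafilter.of_le l
  let f : H × ℕ → G := fun p => j p.2 * p.1 * (j p.2)⁻¹
  have hsnd : ∀ x : H → ℕ → M, ∀ y, (∀ h, Tendsto (x h) atTop (𝓝 y)) →
      Tendsto (fun p : H × ℕ => x p.1 p.2) V (𝓝 y) := by
    intro x y hx
    refine Tendsto.mono_left ?_ hV
    intro s hs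
    have : ∀ᶠ p : H × ℕ in l, x p.1 p.2 ∈ s := by
      refine eventually_curry_iff.2 ?_
      exact Eventually.of_forall fun h => hU ((hx h) hs)
    exact this
  have hf : Tendsto f V cofinite := by
    refine Tendsto.mono_left ?_ hV
    refine le_cofinite_iff_eventually_ne.2 fun g => ?_
    rw [eventually_map]
    refine (eventually_curry_iff (p := fun p : H × ℕ => f p ≠ g)).2 ?_
    have hsub : {h : H | ¬ ∀ᶠ n in (U : Filter ℕ), f (h, n) ≠ g}.Subsingleton := by
      intro h₁ hh₁ h₂ hh₂
      have e1 : ∀ᶠ n in (U : Filter ℕ), ¬ (f (h₁, n) ≠ g) := Ultrafilter.eventually_not.2 hh₁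
      have e2 : ∀ᶠ n in (U : Filter ℕ), ¬ (f (h₂, n) ≠ g) := Ultrafilter.eventually_not.2 hh₂
      obtain ⟨n, n1, n2⟩ := (e1.and e2).exists
      push Not at n1 n2
      have := n1.trans n2.symm
      simpa [f] using this
    exact hsub.finite
  have hu := hsnd (fun _ n => j n • z) a (fun _ => hja)
  have hv := hsnd (fun _ n => j n • q) b (fun _ => hjb q hq)
  have hu' : Tendsto (fun p => f p • (fun p : H × ℕ => j p.2 • z) p) V (𝓝 a) := by
    have := hsnd (fun h n => j n • (h : G) • z) a
      (fun h => by simpa only [hfix h h.2] using hja)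
    refine this.congr fun p => ?_
    simp [f, mul_smul]
  have hv' : Tendsto (fun p => f p • (fun p : H × ℕ => j p.2 • q) p) V (𝓝 b) := by
    have := hsnd (fun h n => j n • (h : G) • q) b (fun h => hjb _ (by
      intro h'
      rw [← hfix h h.2] at h'
      exact hq (MulAction.injective _ h')))
    refine this.congr fun p => ?_
    simp [f, mul_smul]
  have ezA := hu.eventually (hA.mem_nhds haA)
  obtain ⟨c', hc'⟩ := ultra_lim V (fun p => f p • c)
  have hcases : c' = a ∨ c' = b := by
    by_contra hne
    push Not at hne
    exact pd_filter hconv V f hf _ _ _ tendsto_const_nhds hu hv hc' hu' hv' ⟨hca, hcb, hab⟩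
      ⟨hne.1, hne.2, hab⟩
  rcases hcases with rfl | rfl
  · have := attract_set hconv V f hf _ _ hab hca hcb hu hv hu' hv' hc' hA hB haA hbB
    obtain ⟨p, hp1, hp2⟩ := (this.and ezA).exists
    refine no_expand hconv H z hH (j p.2) (p.1 : G)⁻¹ (H.inv_mem p.1.2) hA hAB hcA hcB hp2 ?_
    intro x hx
    by_contra hxB
    have h1 := hp1 _ hxB
    apply hx
    simpa [f, mul_smul] using h1
  · have := attract_set hconv V f hf _ _ hab.symm hcb hca hv hu hv' hu' hc' hB hA hbB haA
    obtain ⟨p, hp1, hp2⟩ := (this.and ezA).exists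
    exact no_expand hconv H z hH (j p.2) (p.1 : G) p.1.2 hA hAB hcA hcB hp2 hp1

theorem conical_mem_limitSet {G M : Type*} [Group G] [TopologicalSpace M] [CompactSpace M]
    [T2Space M] [MulAction G M] (hconv : IsConvergenceAction G M)
    (h3 : ∃ a b c : M, a ≠ b ∧ a ≠ c ∧ b ≠ c)
    (H : Subgroup G) (z : M) (h : ℕ → G) (hH : ∀ n, h n ∈ H) (a b : M) (hab : a ≠ b)
    (hja : Tendsto (fun n => h n • z) atTop (𝓝 a))
    (hjb : ∀ q : M, q ≠ z → Tendsto (fun n => h n • q) atTop (𝓝 b)) :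
    z ∈ limitSet G M H := by
  have hf := conical_finite h3 z b h hjb
  obtain ⟨c, hca, hcb⟩ : ∃ c : M, c ≠ a ∧ c ≠ b :=
    third_point h3 a b
  let U : Ultrafilter ℕ := hyperfilter ℕ
  have hU : (U : Filter ℕ) ≤ atTop := Nat.hyperfilter_le_atTop
  obtain ⟨y, hy⟩ := ultra_lim U (fun n => (h n)⁻¹ • c)
  have hyz : y = z := by
    by_contra hyz
    obtain ⟨q, hqz, hqy⟩ : ∃ q : M, q ≠ z ∧ q ≠ y :=
      third_point h3 z y
    refine pd_filter hconv U h (hf.mono_left hU) _ _ _ hy (tendsto_const_nhds (x := z))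
      (tendsto_const_nhds (x := q)) (x₁ := c) ?_ (hja.mono_left hU) ((hjb q hqz).mono_left hU)
      ⟨hyz, hqy.symm, hqz.symm⟩ ⟨hca, hcb, hab⟩
    simp
  subst hyz
  refine ⟨c, mem_closure_of_tendsto hy ?_⟩
  filter_upwards [(hja.eventually_ne hca.symm).filter_mono hU] with n hn
  refine ⟨⟨(h n)⁻¹, H.inv_mem (hH n), rfl⟩, ?_⟩
  intro h'
  apply hn
  rw [← (show _ = y from h'), smul_inv_smul]

/-- if `H` is dynamically quasiconvex, `J` is infinite and
`z ∈ Λ(H) ∩ Λ(J)` is a conical limit point of `J`, then `H ∩ J` is infinite, `z` is a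
conical limit point of `H ∩ J`, and in particular `z ∈ Λ(H ∩ J)`. -/
theorem conical_limit_point_of_intersection
    {G M : Type*} [Group G] [TopologicalSpace M] [CompactSpace M]
    [TopologicalSpace.MetrizableSpace M] [MulAction G M]
    (hconv : IsConvergenceAction G M)
    (h3 : ∃ a b c : M, a ≠ b ∧ a ≠ c ∧ b ≠ c)
    (H J : Subgroup G) (hdqc : DynamicallyQuasiconvex G M H)
    (hJinf : (J : Set G).Infinite)
    (z : M) (hz : z ∈ limitSet G M H ∩ limitSet G M J)
    (hcon : IsConicalLimitPoint G M J z) :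
    ((H ⊓ J : Subgroup G) : Set G).Infinite ∧
      IsConicalLimitPoint G M (H ⊓ J) z ∧
      z ∈ limitSet G M (H ⊓ J) := by
  obtain ⟨j, a, b, hj, hab, hja, hjb⟩ := hcon
  have hw : ∃ w ∈ limitSet G M H, w ≠ z := by
    by_contra hne
    push Not at hne
    exact parabolic_not_conical hconv h3 H z hz.1 hne j a b hab hja hjb
  obtain ⟨w, hwH, hwz⟩ := hw
  obtain ⟨K, hKn, L, hLn, hKc, hLc, hKL⟩ : ∃ K ∈ 𝓝 a, ∃ L ∈ 𝓝 b, IsClosed K ∧ IsClosed L ∧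
      Disjoint K L := by
    obtain ⟨u, hu, hu', v, hv, hv', huv⟩ := exists_open_nhds_disjoint_closure hab
    exact ⟨closure u, mem_of_superset (hu'.mem_nhds hu) subset_closure, closure v,
      mem_of_superset (hv'.mem_nhds hv) subset_closure, isClosed_closure, isClosed_closure, huv⟩
  have hfin := hdqc K L hKc hLc hKL
  have hev : ∀ᶠ n in atTop, (j n : G ⧸ H) ∈ ((fun g : G => (g : G ⧸ H)) ''
      {g : G | ((g • limitSet G M H) ∩ K).Nonempty ∧
               ((g • limitSet G M H) ∩ L).Nonempty}) := by
    filter_upwards [hja hKn, hjb w hwz hLn] with n h1 h2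
    exact ⟨j n, ⟨⟨_, ⟨z, hz.1, rfl⟩, h1⟩, ⟨_, ⟨w, hwH, rfl⟩, h2⟩⟩, rfl⟩
  obtain ⟨C, hC⟩ : ∃ C : G ⧸ H, ∃ᶠ n in atTop, (j n : G ⧸ H) = C := by
    by_contra hne
    push Not at hne
    have := (hfin.eventually_all (l := (atTop : Filter ℕ))
      (p := fun C n => ¬ ((j n : G ⧸ H) = C))).2 (fun C _ => hne C)
    obtain ⟨n, h1, h2⟩ := (hev.and this).exists
    exact h2 _ h1 rfl
  obtain ⟨φ, hφ, hφC⟩ := extraction_of_frequently_atTop hC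
  let h : ℕ → G := fun n => (j (φ 0))⁻¹ * j (φ n)
  have hh : ∀ n, h n ∈ H ⊓ J := fun n =>
    ⟨QuotientGroup.eq.1 ((hφC 0).trans (hφC n).symm), J.mul_mem (J.inv_mem (hj _)) (hj _)⟩
  have hha : Tendsto (fun n => h n • z) atTop (𝓝 ((j (φ 0))⁻¹ • a)) := by
    simp only [h, mul_smul]
    exact ((hconv.1 (j (φ 0))⁻¹).tendsto a).comp (hja.comp hφ.tendsto_atTop)
  have hhb : ∀ q : M, q ≠ z → Tendsto (fun n => h n • q) atTop (𝓝 ((j (φ 0))⁻¹ • b)) := by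
    intro q hq
    simp only [h, mul_smul]
    exact ((hconv.1 (j (φ 0))⁻¹).tendsto b).comp ((hjb q hq).comp hφ.tendsto_atTop)
  have hne : (j (φ 0))⁻¹ • a ≠ (j (φ 0))⁻¹ • b := fun h' => hab (MulAction.injective _ h')
  refine ⟨?_, ⟨h, _, _, hh, hne, hha, hhb⟩,
    conical_mem_limitSet hconv h3 _ z h hh _ _ hne hha hhb⟩
  intro hfinHJ
  have := (conical_finite h3 z _ h hhb).eventually hfinHJ.compl_mem_cofinite
  obtain ⟨n, hn⟩ := this.exists
  exact hn (hh n)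
end

section
/- Let G be a finitely generated group with nontrivial Floyd boundary ∂G, equipped with the convergence group action of G on ∂G, and let H be an undistorted finitely generated subgroup of G with |Λ(H)| ≥ 2 in ∂G. Then for any g ∈ G \ H, the inclusion gHg⁻¹ ⊆ H implies gHg⁻¹ = H. -/
open Pointwise Filter Topology Set

section Floyd

variable {G : Type*} [Group G]

/-- The word metric on `G` determined by a generating set `S`: the length of a shortest
word over `S` representing `x⁻¹ * y`. -/
noncomputable def wordDist (S : Set G) (x y : G) : ℕ :=
  sInf {n : ℕ | ∃ l : List G, (∀ a ∈ l, a ∈ S) ∧ l.prod = x⁻¹ * y ∧ l.length = n}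

/-- The Floyd length of the edge of the Cayley graph `Γ(G,S)` joining `x` and `y`:
the edge is rescaled by the factor `f(d_S(1,e)) = d_S(1,e)⁻²` (where `d_S(1,e)` is the
word distance from the identity to the edge, and edges at the identity keep length 1). -/
noncomputable def floydEdgeWeight (S : Set G) (x y : G) : ℝ :=
  ((max 1 (min (wordDist S 1 x) (wordDist S 1 y)) : ℕ) : ℝ)⁻¹ ^ 2

/-- The Floyd length of an edge path in the Cayley graph, recorded as its list of
vertices: the sum of the rescaled lengths of its edges. -/
noncomputable def floydLength (S : Set G) : List G → ℝ
  | [] => 0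
  | [_] => 0
  | a :: b :: l => floydEdgeWeight S a b + floydLength S (b :: l)

/-- `l` is (the list of vertices of) an edge path in the Cayley graph `Γ(G,S)` from `x`
to `y`: consecutive vertices are at word distance 1. -/
def IsEdgePath (S : Set G) (x y : G) (l : List G) : Prop :=
  l.head? = some x ∧ l.getLast? = some y ∧ List.Chain' (fun a b => wordDist S a b = 1) l

/-- The Floyd metric on `G`: the infimum of Floyd lengths of edge paths joining the two
points. -/
noncomputable def floydDist (S : Set G) (x y : G) : ℝ :=
  sInf {r : ℝ | ∃ l : List G, IsEdgePath S x y l ∧ floydLength S l = r}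

/-- The limit set in the Floyd completion `𝔾` (with `ι : G → 𝔾` the canonical map) of a
subgroup `H ≤ G`: the set of accumulation points of the `H`-orbits of points of `G`. -/
def floydLimitSet {𝔾 : Type*} [TopologicalSpace 𝔾] (ι : G → 𝔾) (H : Subgroup G) :
    Set 𝔾 :=
  {x : 𝔾 | ∃ g₀ : G, x ∈ closure (((fun h : G => ι (h * g₀)) '' (H : Set G)) \ {x})}

/-- `H` (with finite generating set `T`) is undistorted in `G` (with finite generating
set `S`): the inclusion `(H, d_T) → (G, d_S)` is a quasi-isometric embedding. -/
def IsUndistorted (S T : Set G) (H : Subgroup G) : Prop :=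
  ∃ ε : ℝ, 1 ≤ ε ∧ ∀ x ∈ H, ∀ y ∈ H,
    ε⁻¹ * (wordDist T x y : ℝ) - ε ≤ (wordDist S x y : ℝ) ∧
    (wordDist S x y : ℝ) ≤ ε * (wordDist T x y : ℝ) + ε

end Floyd

section FloydAux

variable {G : Type*} [Group G]

lemma wordDist_le (S : Set G) (x y : G) (l : List G) (hl : ∀ a ∈ l, a ∈ S)
    (hp : l.prod = x⁻¹ * y) : wordDist S x y ≤ l.length :=
  Nat.sInf_le ⟨l, hl, hp, rfl⟩

lemma exists_word_of_nonempty (S : Set G) (x y : G)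
    (h : ∃ l : List G, (∀ a ∈ l, a ∈ S) ∧ l.prod = x⁻¹ * y) :
    ∃ l : List G, (∀ a ∈ l, a ∈ S) ∧ l.prod = x⁻¹ * y ∧ l.length = wordDist S x y := by
  obtain ⟨l, hl, hp⟩ := h
  exact Nat.sInf_mem (s := {n : ℕ | ∃ l : List G, (∀ a ∈ l, a ∈ S) ∧ l.prod = x⁻¹ * y ∧
    l.length = n}) ⟨l.length, l, hl, hp, rfl⟩

lemma exists_word (S : Set G) (hsym : ∀ s ∈ S, s⁻¹ ∈ S) (hgen : Subgroup.closure S = ⊤)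
    (x y : G) :
    ∃ l : List G, (∀ a ∈ l, a ∈ S) ∧ l.prod = x⁻¹ * y ∧ l.length = wordDist S x y := by
  apply exists_word_of_nonempty
  have : x⁻¹ * y ∈ Subgroup.closure S := by rw [hgen]; trivial
  rw [← Subgroup.mem_toSubmonoid, Subgroup.closure_toSubmonoid] at this
  obtain ⟨l, hl, hp⟩ := Submonoid.exists_list_of_mem_closure this
  refine ⟨l, fun a ha => ?_, hp⟩
  rcases hl a ha with h | h
  · exact h
  · simpa using hsym _ h

lemma wordDist_left (S : Set G) (g x y : G) :
    wordDist S (g * x) (g * y) = wordDist S x y := by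
  unfold wordDist
  have : (g * x)⁻¹ * (g * y) = x⁻¹ * y := by group
  rw [this]

lemma wordDist_tri (S : Set G) (hsym : ∀ s ∈ S, s⁻¹ ∈ S) (hgen : Subgroup.closure S = ⊤)
    (x y z : G) : wordDist S x z ≤ wordDist S x y + wordDist S y z := by
  obtain ⟨l, hl, hp, hn⟩ := exists_word S hsym hgen x y
  obtain ⟨l', hl', hp', hn'⟩ := exists_word S hsym hgen y z
  rw [← hn, ← hn', ← List.length_append]
  apply wordDist_le
  · intro a ha
    rcases List.mem_append.1 ha with h | h
    · exact hl a h
    · exact hl' a h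
  · rw [List.prod_append, hp, hp']; group

lemma wordDist_symm_le (S : Set G) (hsym : ∀ s ∈ S, s⁻¹ ∈ S)
    (hgen : Subgroup.closure S = ⊤)
    (x y : G) : wordDist S x y ≤ wordDist S y x := by
  obtain ⟨l, hl, hp, hn⟩ := exists_word S hsym hgen y x
  rw [← hn]
  have := wordDist_le S x y (l.map (fun a => a⁻¹)).reverse (by
    intro a ha
    simp only [List.mem_reverse, List.mem_map] at ha
    obtain ⟨b, hb, rfl⟩ := ha
    exact hsym _ (hl _ hb)) (by
    rw [← List.prod_inv_reverse, hp]; group)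
  simpa using this

lemma wordDist_comm' (S : Set G) (hsym : ∀ s ∈ S, s⁻¹ ∈ S)
    (hgen : Subgroup.closure S = ⊤)
    (x y : G) : wordDist S x y = wordDist S y x :=
  le_antisymm (wordDist_symm_le S hsym hgen x y) (wordDist_symm_le S hsym hgen y x)

lemma ball_finite (S : Finset G) (hsym : ∀ s ∈ (S : Set G), s⁻¹ ∈ (S : Set G))
    (hgen : Subgroup.closure (S : Set G) = ⊤) (R : ℕ) :
    {x : G | wordDist (S : Set G) 1 x < R}.Finite := by
  have h : {l : List S | l.length < R}.Finite := List.finite_length_lt S R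
  refine (h.image (fun l => (l.map Subtype.val).prod)).subset ?_
  intro x hx
  obtain ⟨l, hl, hp, hn⟩ := exists_word (S : Set G) hsym hgen 1 x
  refine ⟨l.attach.map (fun a => ⟨a.1, hl a.1 a.2⟩), ?_, ?_⟩
  · simp only [mem_setOf_eq] at hx ⊢
    simpa [hn] using hx
  · simp only [List.map_map]
    have : (Subtype.val ∘ fun a : {a // a ∈ l} => (⟨a.1, hl a.1 a.2⟩ : S)) = Subtype.val := rfl
    rw [this, List.attach_map_subtype_val, hp]; simp

lemma floydEdgeWeight_nonneg (S : Set G) (x y : G) : 0 ≤ floydEdgeWeight S x y := by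
  unfold floydEdgeWeight; positivity

lemma floydLength_nonneg (S : Set G) : ∀ l : List G, 0 ≤ floydLength S l
  | [] => le_rfl
  | [_] => le_rfl
  | a :: b :: l => by
    rw [floydLength]
    exact add_nonneg (floydEdgeWeight_nonneg S a b) (floydLength_nonneg S (b :: l))

lemma floydDist_edge (S : Set G) (x y : G) (h : wordDist S x y = 1) :
    floydDist S x y ≤ floydEdgeWeight S x y := by
  unfold floydDist
  apply csInf_le
  · refine ⟨0, ?_⟩
    rintro r ⟨l, -, rfl⟩
    exact floydLength_nonneg S l
  · refine ⟨[x, y], ⟨by simp, by simp, ?_⟩, by simp [floydLength]⟩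
    change List.IsChain _ _
    simp [h]

lemma floyd_edge_bound (S : Set G) (x y : G) (h : wordDist S x y = 1) (r : ℕ) (hr : 1 ≤ r)
    (hx : r ≤ wordDist S 1 x) (hy : r ≤ wordDist S 1 y) :
    floydDist S x y ≤ 1 / (r : ℝ) ^ 2 := by
  refine (floydDist_edge S x y h).trans ?_
  unfold floydEdgeWeight
  rw [inv_pow, one_div]
  have h1 : r ≤ max 1 (min (wordDist S 1 x) (wordDist S 1 y)) :=
    le_max_of_le_right (le_min hx hy)
  have h0 : (0 : ℝ) < r := by exact_mod_cast hr
  have h2 : (r : ℝ) ≤ ((max 1 (min (wordDist S 1 x) (wordDist S 1 y)) : ℕ) : ℝ) := by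
    exact_mod_cast h1
  gcongr

lemma floyd_word_bound (S : Set G) (hsym : ∀ s ∈ S, s⁻¹ ∈ S)
    (hgen : Subgroup.closure S = ⊤) {𝔾 : Type*} [MetricSpace 𝔾] (ι : G → 𝔾)
    (hdist : ∀ x y : G, dist (ι x) (ι y) = floydDist S x y) (r : ℕ) (hr : 1 ≤ r) :
    ∀ (l : List G) (x : G), (∀ a ∈ l, a ∈ S) → r + l.length ≤ wordDist S 1 x →
      dist (ι x) (ι (x * l.prod)) ≤ l.length * (1 / (r : ℝ) ^ 2)
  | [], x, _, _ => by simp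
  | a :: l, x, hl, hx => by
    have ha : a ∈ S := hl a (by simp)
    have h1 : wordDist S x (x * a) ≤ 1 := by
      have := wordDist_le S x (x * a) [a] (by simpa using ha) (by simp)
      simpa using this
    have h1' : wordDist S (x * a) x ≤ 1 := by
      rwa [wordDist_comm' S hsym hgen]
    have h2 := wordDist_tri S hsym hgen 1 (x * a) x
    simp only [List.length_cons] at hx
    have ih := floyd_word_bound S hsym hgen ι hdist r hr l (x * a)
      (fun b hb => hl b (by simp [hb])) (by omega)
    have h3 : dist (ι x) (ι (x * a)) ≤ 1 / (r : ℝ) ^ 2 := by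
      rcases Nat.le_one_iff_eq_zero_or_eq_one.1 h1 with h | h
      · obtain ⟨l', -, hp, hn⟩ := exists_word S hsym hgen x (x * a)
        rw [h, List.length_eq_zero_iff] at hn
        subst hn
        have : a = 1 := by simpa using hp.symm
        subst this
        simp
      · rw [hdist]
        exact floyd_edge_bound S x (x * a) h r hr (by omega) (by omega)
    have h4 := dist_triangle (ι x) (ι (x * a)) (ι (x * a * l.prod))
    rw [List.prod_cons, ← mul_assoc]
    push_cast [List.length_cons]
    linarith

lemma floyd_step_bound (S : Set G) (hsym : ∀ s ∈ S, s⁻¹ ∈ S)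
    (hgen : Subgroup.closure S = ⊤) {𝔾 : Type*} [MetricSpace 𝔾] (ι : G → 𝔾)
    (hdist : ∀ x y : G, dist (ι x) (ι y) = floydDist S x y) (r L : ℕ) (hr : 1 ≤ r)
    (x y : G) (hL : wordDist S x y ≤ L) (hx : r + L ≤ wordDist S 1 x) :
    dist (ι x) (ι y) ≤ L * (1 / (r : ℝ) ^ 2) := by
  obtain ⟨l, hl, hp, hn⟩ := exists_word S hsym hgen x y
  have := floyd_word_bound S hsym hgen ι hdist r hr l x hl (by omega)
  rw [hp, mul_inv_cancel_left, hn] at this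
  refine this.trans ?_
  have : (wordDist S x y : ℝ) ≤ L := by exact_mod_cast hL
  gcongr

/-- step bound in terms of the norm of the point -/
lemma floyd_step_bound' (S : Set G) (hsym : ∀ s ∈ S, s⁻¹ ∈ S)
    (hgen : Subgroup.closure S = ⊤) {𝔾 : Type*} [MetricSpace 𝔾] (ι : G → 𝔾)
    (hdist : ∀ x y : G, dist (ι x) (ι y) = floydDist S x y) (L : ℕ)
    (x y : G) (hL : wordDist S x y ≤ L) (hx : 2 * L + 2 ≤ wordDist S 1 x) :
    dist (ι x) (ι y) ≤ 9 * L * (1 / (wordDist S 1 x : ℝ) ^ 2) := by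
  have h := floyd_step_bound S hsym hgen ι hdist (wordDist S 1 x - L) L (by omega) x y hL
    (by omega)
  refine h.trans ?_
  set w := wordDist S 1 x
  have h1 : (w : ℝ) / 3 ≤ ((w - L : ℕ) : ℝ) := by
    have : w ≤ 3 * (w - L) := by omega
    have : (w : ℝ) ≤ 3 * ((w - L : ℕ) : ℝ) := by exact_mod_cast this
    linarith
  have h0 : (0 : ℝ) < w := by
    have : 0 < w := by omega
    exact_mod_cast this
  calc (L : ℝ) * (1 / ((w - L : ℕ) : ℝ) ^ 2) ≤ L * (1 / ((w : ℝ) / 3) ^ 2) := by gcongr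
    _ = _ := by field_simp; norm_num

lemma limit_approx (S : Finset G) (hsym : ∀ s ∈ (S : Set G), s⁻¹ ∈ (S : Set G))
    (hgen : Subgroup.closure (S : Set G) = ⊤) {𝔾 : Type*} [MetricSpace 𝔾] (ι : G → 𝔾)
    (hdist : ∀ x y : G, dist (ι x) (ι y) = floydDist (S : Set G) x y)
    (H : Subgroup G) (p : 𝔾) (hp : p ∈ floydLimitSet ι H) (u : G) (e : ℝ) (he : 0 < e) :
    ∃ h ∈ H, dist (ι (h * u)) p < e := by
  obtain ⟨g₀, hg⟩ := hp
  set L := wordDist (S : Set G) g₀ u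
  obtain ⟨r, hr⟩ : ∃ r : ℕ, (L : ℝ) * 2 / e < r := exists_nat_gt _
  -- the finite set to avoid
  have hfin : (ι '' {x : G | wordDist (S : Set G) 1 x < (r + 1) + L}).Finite :=
    (ball_finite S hsym hgen _).image _
  have hcl : IsClosed (ι '' {x : G | wordDist (S : Set G) 1 x < (r + 1) + L} \ {p}) :=
    (hfin.subset diff_subset).isClosed
  have hnhd : (ι '' {x : G | wordDist (S : Set G) 1 x < (r + 1) + L} \ {p})ᶜ ∩
      Metric.ball p (e / 2) ∈ 𝓝 p :=
    inter_mem (hcl.isOpen_compl.mem_nhds (by simp)) (Metric.ball_mem_nhds p (by linarith))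
  obtain ⟨z, ⟨hz1, hz2⟩, ⟨h, hh, rfl⟩, hzp⟩ := mem_closure_iff_nhds.1 hg _ hnhd
  refine ⟨h, hh, ?_⟩
  have hfar : (r + 1) + L ≤ wordDist (S : Set G) 1 (h * g₀) := by
    by_contra hcon
    exact hz1 ⟨⟨_, not_le.1 hcon, rfl⟩, hzp⟩
  have hst := floyd_step_bound (S : Set G) hsym hgen ι hdist (r + 1) L (by omega) (h * g₀)
    (h * u) (by rw [wordDist_left]) hfar
  have hb : (L : ℝ) * (1 / ((r + 1 : ℕ) : ℝ) ^ 2) < e / 2 := by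
    have h0 : (0 : ℝ) ≤ r := by positivity
    rw [div_lt_iff₀ he] at hr
    rw [mul_one_div, div_lt_iff₀ (by positivity)]
    push_cast
    nlinarith [mul_nonneg h0 he.le, mul_nonneg h0 (mul_nonneg h0 he.le)]
  have hz2' : dist (ι (h * g₀)) p < e / 2 := hz2
  have := dist_triangle_left (ι (h * u)) p (ι (h * g₀))
  linarith

lemma path_exists (S T : Finset G) (hsym : ∀ s ∈ (S : Set G), s⁻¹ ∈ (S : Set G))
    (hgen : Subgroup.closure (S : Set G) = ⊤)
    (H : Subgroup G) (hT : (T : Set G) ⊆ (H : Set G)) (ε : ℝ) (hε : 1 ≤ ε)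
    (hund : ∀ x ∈ H, ∀ y ∈ H,
    ε⁻¹ * (wordDist (T : Set G) x y : ℝ) - ε ≤ (wordDist (S : Set G) x y : ℝ) ∧
    (wordDist (S : Set G) x y : ℝ) ≤ ε * (wordDist (T : Set G) x y : ℝ) + ε)
    (L : ℕ) (hL : 2 * ε ≤ L) (a b : G) (ha : a ∈ H) (hb : b ∈ H) :
    ∃ (n : ℕ) (x : ℕ → G), x 0 = a ∧ x n = b ∧ (∀ i, x i ∈ H) ∧
      (∀ i < n, wordDist (S : Set G) (x i) (x (i + 1)) ≤ L) ∧
      (∀ i j, i ≤ j → j ≤ n →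
        ε⁻¹ * ((j : ℝ) - i) - ε ≤ wordDist (S : Set G) (x i) (x j)) := by
  by_cases hw : ∃ l : List G, (∀ c ∈ l, c ∈ (T : Set G)) ∧ l.prod = a⁻¹ * b
  · obtain ⟨l, hl, hp, hn⟩ := exists_word_of_nonempty (T : Set G) a b hw
    have hmem : ∀ i, a * (l.take i).prod ∈ H := fun i =>
      H.mul_mem ha (H.list_prod_mem fun c hc => hT (hl c (List.mem_of_mem_take hc)))
    refine ⟨l.length, fun i => a * (l.take i).prod, by simp, by simp [hp], hmem, ?_, ?_⟩
    · intro i hi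
      have h1 := (hund _ (hmem i) _ (hmem (i + 1))).2
      have h2 : wordDist (T : Set G) (a * (l.take i).prod) (a * (l.take (i + 1)).prod) ≤ 1 := by
        have := wordDist_le (T : Set G) (a * (l.take i).prod) (a * (l.take (i + 1)).prod) [l[i]]
          (by intro c hc; rw [List.mem_singleton] at hc; subst hc
              exact hl _ (List.getElem_mem hi))
          (by rw [List.prod_take_succ l i hi]; simp [mul_assoc])
        simpa using this
      have h3 : (wordDist (T : Set G) (a * (l.take i).prod) (a * (l.take (i + 1)).prod) : ℝ)
        ≤ 1 := by exact_mod_cast h2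
      have h4 : (wordDist (S : Set G) (a * (l.take i).prod) (a * (l.take (i + 1)).prod) : ℝ)
        ≤ L := by nlinarith
      exact_mod_cast h4
    · intro i j hij hj
      have h1 := (hund _ (hmem i) _ (hmem j)).1
      have h2 : j - i ≤
          wordDist (T : Set G) (a * (l.take i).prod) (a * (l.take j).prod) := by
        obtain ⟨m, hm, hmp, hmn⟩ := exists_word_of_nonempty (T : Set G)
          (a * (l.take i).prod) (a * (l.take j).prod)
          ⟨(l.take j).drop i,
            fun c hc => hl c (List.mem_of_mem_take (List.mem_of_mem_drop hc)), by
            have := List.prod_take_mul_prod_drop (l.take j) i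
            rw [List.take_take, min_eq_left hij] at this
            rw [← this]; group⟩
        have := wordDist_le (T : Set G) a b (l.take i ++ m ++ l.drop j) (by
          intro c hc
          simp only [List.mem_append] at hc
          rcases hc with (hc | hc) | hc
          · exact hl c (List.mem_of_mem_take hc)
          · exact hm c hc
          · exact hl c (List.mem_of_mem_drop hc)) (by
          have h5 := List.prod_take_mul_prod_drop l j
          rw [List.prod_append, List.prod_append, hmp, ← hp, ← h5]; group)
        simp only [List.length_append, List.length_take, List.length_drop] at this
        omega
      have h3 : (j : ℝ) - i ≤
          wordDist (T : Set G) (a * (l.take i).prod) (a * (l.take j).prod) := by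
        rw [← Nat.cast_sub hij]; exact_mod_cast h2
      have h4 : 0 ≤ ε⁻¹ := by positivity
      have := mul_le_mul_of_nonneg_left h3 h4
      linarith
  · have h0 : wordDist (T : Set G) a b = 0 := by
      unfold wordDist
      convert Nat.sInf_empty
      ext n
      simp only [mem_setOf_eq, mem_empty_iff_false, iff_false]
      rintro ⟨l, hl, hp, -⟩
      exact hw ⟨l, hl, hp⟩
    have h1 := (hund _ ha _ hb).2
    rw [h0] at h1
    refine ⟨1, fun i => if i = 0 then a else b, by simp, by simp, ?_, ?_, ?_⟩
    · intro i; dsimp only; split_ifs <;> assumption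
    · intro i hi
      obtain rfl : i = 0 := by omega
      have : (wordDist (S : Set G) a b : ℝ) ≤ L := by
        norm_num at h1; linarith
      simpa using this
    · intro i j hij hj
      have h2 : (j : ℝ) - i ≤ 1 := by
        have h3 : (j : ℝ) ≤ 1 := by exact_mod_cast hj
        have h4 : (0 : ℝ) ≤ i := by positivity
        linarith
      have h3 : ε⁻¹ ≤ 1 := inv_le_one_of_one_le₀ hε
      have h5 : 0 ≤ ε⁻¹ := by positivity
      have h4 : (0 : ℝ) ≤ wordDist (S : Set G) (if i = 0 then a else b)
        (if j = 0 then a else b) := by positivity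
      have h6 := mul_le_mul_of_nonneg_left h2 h5
      refine le_trans ?_ h4
      linarith

lemma sum_tail_bound (R : ℝ) (hR : 1 ≤ R) (n : ℕ) :
    ∑ k ∈ Finset.range n, 1 / (R + k) ^ 2 ≤ 2 / R := by
  have : ∑ k ∈ Finset.range n, 1 / (R + k) ^ 2 ≤ 2 / R - 2 / (R + n) := by
    induction n with
    | zero => simp
    | succ n ih =>
      rw [Finset.sum_range_succ]
      have hn : (0 : ℝ) ≤ n := by positivity
      have : 1 / (R + n) ^ 2 ≤ 2 / (R + n) - 2 / (R + (n + 1 : ℕ)) := by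
        push_cast
        rw [div_sub_div _ _ (by positivity) (by positivity), div_le_div_iff₀ (by positivity)
          (by positivity)]
        nlinarith [mul_nonneg (sq_nonneg (R + n)) (by linarith : 0 ≤ R + n - 1)]
      linarith
  have h2 : 0 ≤ 2 / (R + n) := by positivity
  linarith

lemma sum_two_sided (R : ℝ) (hR : 1 ≤ R) (n i₀ : ℕ) (hi : i₀ ≤ n) :
    ∑ i ∈ Finset.range n, 1 / (R + |(i : ℝ) - i₀|) ^ 2 ≤ 4 / R := by
  obtain ⟨m, rfl⟩ := Nat.exists_eq_add_of_le hi
  rw [Finset.sum_range_add]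
  have h1 : ∑ i ∈ Finset.range i₀, 1 / (R + |(i : ℝ) - i₀|) ^ 2 ≤ 2 / R := by
    rw [← Finset.sum_range_reflect]
    refine (Finset.sum_le_sum ?_).trans (sum_tail_bound R hR i₀)
    intro k hk
    rw [Finset.mem_range] at hk
    have : ((i₀ - 1 - k : ℕ) : ℝ) = i₀ - 1 - k := by
      rw [Nat.cast_sub (by omega), Nat.cast_sub (by omega)]; simp
    rw [this]
    have h3 : (k : ℝ) ≤ |(i₀ : ℝ) - 1 - k - i₀| := by
      rw [le_abs]; right; linarith
    have h4 : (0 : ℝ) ≤ k := by positivity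
    gcongr
  have h2 : ∑ x ∈ Finset.range m, 1 / (R + |((i₀ + x : ℕ) : ℝ) - i₀|) ^ 2 ≤ 2 / R := by
    refine le_of_eq_of_le (Finset.sum_congr rfl ?_) (sum_tail_bound R hR m)
    intro k _
    push_cast
    rw [add_sub_cancel_left, abs_of_nonneg (by positivity)]
  have : 4 / R = 2 / R + 2 / R := by ring
  linarith

/-- Karlsson's lemma: quasi-geodesics far from the identity have small Floyd diameter. -/
lemma karlsson (S : Set G) (hsym : ∀ s ∈ S, s⁻¹ ∈ S)
    (hgen : Subgroup.closure S = ⊤) {𝔾 : Type*} [MetricSpace 𝔾] (ι : G → 𝔾)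
    (hdist : ∀ x y : G, dist (ι x) (ι y) = floydDist S x y) (L : ℕ) (ε : ℝ) (hε : 1 ≤ ε)
    (R : ℕ) (hR1 : 2 * L + 2 ≤ R) (hR2 : ε ≤ R) (n : ℕ) (y : ℕ → G)
    (hstep : ∀ i < n, wordDist S (y i) (y (i + 1)) ≤ L)
    (hq : ∀ i j, i ≤ j → j ≤ n → ε⁻¹ * ((j : ℝ) - i) - ε ≤ wordDist S (y i) (y j))
    (hfar : ∀ i ≤ n, R ≤ wordDist S 1 (y i)) :
    dist (ι (y 0)) (ι (y n)) ≤ 9 * L * (16 * ε ^ 2) * (4 / R) := by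
  obtain ⟨i₀, hi₀, hmin⟩ := Finset.exists_min_image (Finset.range (n + 1))
    (fun i => wordDist S 1 (y i)) ⟨0, by simp⟩
  rw [Finset.mem_range] at hi₀
  have hR1' : (1 : ℝ) ≤ R := by exact_mod_cast (by omega : 1 ≤ R)
  have hinv : 0 < ε⁻¹ := by positivity
  have hq' : ∀ i ≤ n, ε⁻¹ * |(i : ℝ) - i₀| - ε ≤ wordDist S (y i₀) (y i) := by
    intro i hi
    rcases le_total i i₀ with h | h
    · have := hq i i₀ h (by omega)
      rw [wordDist_comm' S hsym hgen, abs_sub_comm, abs_of_nonneg]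
      · exact this
      · have : (i : ℝ) ≤ i₀ := by exact_mod_cast h
        linarith
    · have := hq i₀ i h hi
      rw [abs_of_nonneg]
      · exact this
      · have : (i₀ : ℝ) ≤ i := by exact_mod_cast h
        linarith
  have hlow : ∀ i ≤ n, (R + |(i : ℝ) - i₀|) / (4 * ε) ≤ wordDist S 1 (y i) := by
    intro i hi
    have h1 := hq' i hi
    have h2 : (wordDist S 1 (y i₀) : ℝ) ≤ wordDist S 1 (y i) := by
      exact_mod_cast hmin i (by rw [Finset.mem_range]; omega)
    have h3 : (wordDist S (y i₀) (y i) : ℝ) ≤ wordDist S 1 (y i₀) + wordDist S 1 (y i) := by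
      have := wordDist_tri S hsym hgen (y i₀) 1 (y i)
      rw [wordDist_comm' S hsym hgen (y i₀) 1] at this
      exact_mod_cast this
    have h4 : (R : ℝ) ≤ wordDist S 1 (y i) := by exact_mod_cast hfar i hi
    set w := (wordDist S 1 (y i) : ℝ)
    set t := |(i : ℝ) - i₀|
    have h5 : ε⁻¹ * t ≤ 3 * w := by linarith
    have h6 : t ≤ 3 * w * ε := by
      rw [inv_mul_le_iff₀ (by positivity)] at h5; linarith
    rw [div_le_iff₀ (by positivity)]
    nlinarith
  have hsum : dist (ι (y 0)) (ι (y n)) ≤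
      ∑ i ∈ Finset.range n, dist (ι (y i)) (ι (y (i + 1))) :=
    dist_le_range_sum_dist (fun i => ι (y i)) n
  refine hsum.trans ?_
  calc ∑ i ∈ Finset.range n, dist (ι (y i)) (ι (y (i + 1)))
      ≤ ∑ i ∈ Finset.range n, 9 * L * (16 * ε ^ 2) * (1 / (R + |(i : ℝ) - i₀|) ^ 2) := by
        refine Finset.sum_le_sum fun i hi => ?_
        rw [Finset.mem_range] at hi
        have h1 := floyd_step_bound' S hsym hgen ι hdist L (y i) (y (i + 1)) (hstep i hi)
          (hR1.trans (hfar i hi.le))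
        refine h1.trans ?_
        have h2 := hlow i hi.le
        have h3 : (0 : ℝ) < (R + |(i : ℝ) - i₀|) := by positivity
        calc 9 * (L : ℝ) * (1 / (wordDist S 1 (y i) : ℝ) ^ 2)
            ≤ 9 * L * (1 / ((R + |(i : ℝ) - i₀|) / (4 * ε)) ^ 2) := by gcongr
          _ = _ := by field_simp; norm_num
    _ ≤ _ := by
        rw [← Finset.mul_sum]
        have := sum_two_sided R hR1' n i₀ (by omega)
        gcongr

lemma conj_pow_mem (H : Subgroup G) (g : G) (h : ∀ x ∈ H, g * x * g⁻¹ ∈ H) (m : ℕ) :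
    ∀ x ∈ H, g ^ m * x * (g ^ m)⁻¹ ∈ H := by
  induction m with
  | zero => simp
  | succ m ih =>
    intro x hx
    have := h _ (ih x hx)
    rw [pow_succ']
    convert this using 1
    group

end FloydAux

/-- if `G` has nontrivial Floyd boundary and `H` is an undistorted
finitely generated subgroup with `|Λ(H)| ≥ 2` in `∂G`, then `H` cannot properly contain
a conjugate of itself: for `g ∈ G \ H`, `gHg⁻¹ ⊆ H` implies `gHg⁻¹ = H`. -/
theorem undistorted_proper_conjugates
    {G : Type*} [Group G] (S : Finset G)
    (hsym : ∀ s ∈ S, s⁻¹ ∈ S) (hgen : Subgroup.closure (S : Set G) = ⊤)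
    {𝔾 : Type*} [MetricSpace 𝔾] [CompleteSpace 𝔾] [CompactSpace 𝔾]
    (ι : G → 𝔾)
    (hdist : ∀ x y : G, dist (ι x) (ι y) = floydDist (S : Set G) x y)
    (hdense : DenseRange ι)
    [MulAction G 𝔾]
    (hcont : ∀ g : G, Continuous fun x : 𝔾 => g • x)
    (hext : ∀ g x : G, ι (g * x) = g • ι x)
    (hnontriv : ∃ a b c : 𝔾, a ∉ Set.range ι ∧ b ∉ Set.range ι ∧ c ∉ Set.range ι ∧
      a ≠ b ∧ a ≠ c ∧ b ≠ c)
    (hconv : ∀ K L : Set (𝔾 × 𝔾 × 𝔾), IsCompact K → IsCompact L →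
      (∀ t ∈ K ∪ L, (t.1 ∉ Set.range ι ∧ t.2.1 ∉ Set.range ι ∧ t.2.2 ∉ Set.range ι) ∧
        (t.1 ≠ t.2.1 ∧ t.1 ≠ t.2.2 ∧ t.2.1 ≠ t.2.2)) →
      {g : G | ((g • K) ∩ L).Nonempty}.Finite)
    (H : Subgroup G) (T : Finset G) (hT : (T : Set G) ⊆ (H : Set G))
    (hTgen : Subgroup.closure (T : Set G) = H)
    (hund : IsUndistorted (S : Set G) (T : Set G) H)
    (hΛ : 2 ≤ (floydLimitSet ι H).encard) :
    ∀ g : G, g ∉ H →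
      (fun x : G => g * x * g⁻¹) '' (H : Set G) ⊆ (H : Set G) →
      (fun x : G => g * x * g⁻¹) '' (H : Set G) = (H : Set G) := by
  intro g _ hsub
  have hsym' : ∀ s ∈ (S : Set G), s⁻¹ ∈ (S : Set G) := fun s hs => hsym s hs
  have hconj : ∀ x ∈ H, g * x * g⁻¹ ∈ H := fun x hx => hsub ⟨x, hx, rfl⟩
  obtain ⟨ε, hε, hund⟩ := hund
  obtain ⟨p, q, hp, hq, hpq⟩ : ∃ p q, p ∈ floydLimitSet ι H ∧ q ∈ floydLimitSet ι H ∧ p ≠ q := by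
    have h1 : 1 < (floydLimitSet ι H).encard := lt_of_lt_of_le (by norm_num) hΛ
    obtain ⟨p, q, hp, hq, hne⟩ := Set.one_lt_encard_iff.1 h1
    exact ⟨p, q, hp, hq, hne⟩
  have hδ : 0 < dist p q := dist_pos.2 hpq
  obtain ⟨L, hL⟩ := exists_nat_ge (2 * ε)
  obtain ⟨N, hN⟩ := exists_nat_gt (9 * (L : ℝ) * (16 * ε ^ 2) * 4 * 2 / dist p q)
  obtain ⟨M, hM⟩ := exists_nat_ge ε
  set R : ℕ := N + M + (2 * L + 2) with hRdef
  have hRpos : (0 : ℝ) < R := by exact_mod_cast (by omega : 0 < R)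
  have hsmall : 9 * (L : ℝ) * (16 * ε ^ 2) * (4 / R) < dist p q / 2 := by
    have h1 : (N : ℝ) ≤ R := by exact_mod_cast (by omega : N ≤ R)
    rw [div_lt_iff₀ hδ] at hN
    rw [← mul_div_assoc, div_lt_iff₀ hRpos]
    nlinarith
  have hnear : ∀ m : ℕ, ∃ x ∈ H, wordDist (S : Set G) 1 ((g ^ m)⁻¹ * x) < R := by
    intro m
    obtain ⟨h, hh, hhp⟩ := limit_approx S hsym' hgen ι hdist H p hp (g ^ m)⁻¹ (dist p q / 4)
      (by linarith)
    obtain ⟨k, hk, hkq⟩ := limit_approx S hsym' hgen ι hdist H q hq (g ^ m)⁻¹ (dist p q / 4)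
      (by linarith)
    obtain ⟨n, x, hx0, hxn, hxH, hstep, hqg⟩ := path_exists S T hsym' hgen H hT ε hε hund L hL
      _ _ (conj_pow_mem H g hconj m h hh) (conj_pow_mem H g hconj m k hk)
    by_contra hcon
    push Not at hcon
    have hka := karlsson (S : Set G) hsym' hgen ι hdist L ε hε R (by omega)
      (hM.trans (by exact_mod_cast (by omega : M ≤ R))) n (fun i => (g ^ m)⁻¹ * x i)
      (fun i hi => by rw [wordDist_left]; exact hstep i hi)
      (fun i j hij hj => by rw [wordDist_left]; exact hqg i j hij hj)
      (fun i _ => hcon (x i) (hxH i))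
    have e1 : (g ^ m)⁻¹ * x 0 = h * (g ^ m)⁻¹ := by rw [hx0]; group
    have e2 : (g ^ m)⁻¹ * x n = k * (g ^ m)⁻¹ := by rw [hxn]; group
    simp only [e1, e2] at hka
    have t1 := dist_triangle_left p q (ι (h * (g ^ m)⁻¹))
    have t2 := dist_triangle (ι (h * (g ^ m)⁻¹)) (ι (k * (g ^ m)⁻¹)) q
    linarith
  choose x hxH hx using hnear
  have hfin := ball_finite S hsym' hgen R
  have : Finite {z : G | wordDist (S : Set G) 1 z < R} := hfin
  obtain ⟨m, m', hne, heq⟩ := Finite.exists_ne_map_eq_of_infinite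
    (fun m : ℕ => (⟨(g ^ m)⁻¹ * x m, hx m⟩ : {z : G | wordDist (S : Set G) 1 z < R}))
  have hpow : ∃ k : ℕ, g ^ (k + 1) ∈ H := by
    have key : ∀ m m' : ℕ, m < m' → (g ^ m)⁻¹ * x m = (g ^ m')⁻¹ * x m' →
        ∃ k : ℕ, g ^ (k + 1) ∈ H := by
      intro m m' hlt he
      obtain ⟨k, rfl⟩ := Nat.exists_eq_add_of_lt hlt
      refine ⟨k, ?_⟩
      have : g ^ (k + 1) = x (m + k + 1) * (x m)⁻¹ := by
        rw [eq_mul_inv_iff_mul_eq]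
        have h2 : g ^ (m + k + 1) = g ^ (k + 1) * g ^ m := by
          rw [← pow_add]; congr 1; omega
        rw [h2, mul_inv_rev, mul_assoc] at he
        have he' := mul_left_cancel he
        rw [he']; group
      rw [this]
      exact H.mul_mem (hxH _) (H.inv_mem (hxH _))
    have heq' : (g ^ m)⁻¹ * x m = (g ^ m')⁻¹ * x m' := congrArg Subtype.val heq
    rcases lt_or_gt_of_ne hne with h | h
    · exact key m m' h heq'
    · exact key m' m h heq'.symm
  obtain ⟨k, hk⟩ := hpow
  refine Set.Subset.antisymm hsub fun z hz => ?_
  have h1 : (g ^ (k + 1))⁻¹ * z * g ^ (k + 1) ∈ H :=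
    H.mul_mem (H.mul_mem (H.inv_mem hk) hz) hk
  have h2 := conj_pow_mem H g hconj k _ h1
  refine ⟨_, h2, ?_⟩
  simp only [pow_succ]
  have h3 : g * g ^ k = g ^ k * g := by rw [← pow_succ, ← pow_succ']
  calc g * (g ^ k * ((g ^ k * g)⁻¹ * z * (g ^ k * g)) * (g ^ k)⁻¹) * g⁻¹
      = (g * g ^ k) * (g ^ k * g)⁻¹ * z * (g ^ k * g) * (g * g ^ k)⁻¹ := by group
    _ = z := by rw [h3]; group
end
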